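/- arXiv:2409.01125 — 5 statements merged into one kernel-verified Lean document; each statement's English description precedes it below -/
import Mathlib

section
/- Let σ > 0, r, q ∈ ℝ, K > 0, T > 0. The Black–Scholes European call price function C(s,t) = s·e^{-q t}·N(d₁(s,K,t)) − K·e^{-r t}·N(d₂(s,K,t)) satisfies the forward Black–Scholes partial differential equation ∂u/∂t − (1/2)σ²s² ∂²u/∂s² − (r−q)s ∂u/∂s + r u = 0 at every point (s,t) with s > 0 and 0 < t ≤ T. -/
open Real Set

/-- The standard normal cumulative distribution function. -/
noncomputable def stdNormalCDF (x : ℝ) : ℝ :=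
  ∫ y in Set.Iic x, (Real.sqrt (2 * Real.pi))⁻¹ * Real.exp (-(y ^ 2) / 2)

/-- d₁(s,K,t) in the Black–Scholes formula. -/
noncomputable def d1 (σ r q s K t : ℝ) : ℝ :=
  (Real.log (s / K) + (r - q + σ ^ 2 / 2) * t) / (σ * Real.sqrt t)

/-- d₂(s,K,t) in the Black–Scholes formula. -/
noncomputable def d2 (σ r q s K t : ℝ) : ℝ :=
  d1 σ r q s K t - σ * Real.sqrt t

/-- The Black–Scholes European call price. -/
noncomputable def callPrice (σ r q K s t : ℝ) : ℝ :=
  s * Real.exp (-q * t) * stdNormalCDF (d1 σ r q s K t)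
    - K * Real.exp (-r * t) * stdNormalCDF (d2 σ r q s K t)

/-- The standard normal density. -/
noncomputable def stdPhi (x : ℝ) : ℝ :=
  (Real.sqrt (2 * Real.pi))⁻¹ * Real.exp (-(x ^ 2) / 2)

lemma stdPhi_continuous : Continuous stdPhi := by
  unfold stdPhi
  fun_prop

lemma stdPhi_integrable : MeasureTheory.Integrable stdPhi := by
  have h := (integrable_exp_neg_mul_sq (b := 1 / 2) (by norm_num)).const_mul
    (Real.sqrt (2 * Real.pi))⁻¹
  refine h.congr (Filter.Eventually.of_forall fun x => ?_)
  simp only [stdPhi]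
  congr 2
  ring

lemma hasDerivAt_cdf (x : ℝ) : HasDerivAt stdNormalCDF (stdPhi x) x := by
  have heq : stdNormalCDF = fun u => stdNormalCDF 0 + ∫ y in (0 : ℝ)..u, stdPhi y := by
    funext u
    have h := intervalIntegral.integral_Iic_sub_Iic (μ := MeasureTheory.volume) (f := stdPhi)
      (a := 0) (b := u) stdPhi_integrable.integrableOn stdPhi_integrable.integrableOn
    rw [← h]
    simp only [stdNormalCDF, stdPhi]
    ring
  rw [heq]
  exact (intervalIntegral.integral_hasDerivAt_right
    (stdPhi_continuous.intervalIntegrable _ _)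
    stdPhi_continuous.stronglyMeasurable.stronglyMeasurableAtFilter
    stdPhi_continuous.continuousAt).const_add _

lemma key_identity (σ r q K s t : ℝ) (hσ : 0 < σ) (hK : 0 < K) (hs : 0 < s) (ht : 0 < t) :
    K * Real.exp (-r * t) * stdPhi (d2 σ r q s K t)
      = s * Real.exp (-q * t) * stdPhi (d1 σ r q s K t) := by
  have hst : 0 < Real.sqrt t := Real.sqrt_pos.mpr ht
  have hsq : Real.sqrt t ^ 2 = t := Real.sq_sqrt ht.le
  have hd : d1 σ r q s K t * (σ * Real.sqrt t)
      = (Real.log s - Real.log K) + (r - q + σ ^ 2 / 2) * t := by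
    unfold d1
    rw [Real.log_div hs.ne' hK.ne']
    field_simp
  have hexp : Real.log K + -r * t + -(d2 σ r q s K t ^ 2) / 2
      = Real.log s + -q * t + -(d1 σ r q s K t ^ 2) / 2 := by
    unfold d2
    linear_combination hd - σ ^ 2 / 2 * hsq
  have h := congrArg Real.exp hexp
  simp only [Real.exp_add, Real.exp_log hK, Real.exp_log hs] at h
  unfold stdPhi
  linear_combination (Real.sqrt (2 * Real.pi))⁻¹ * h

lemma hasDerivAt_d1_s (σ r q K s t : ℝ) (hσ : 0 < σ) (hK : 0 < K) (hs : 0 < s) (ht : 0 < t) :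
    HasDerivAt (fun x => d1 σ r q x K t) (1 / (s * (σ * Real.sqrt t))) s := by
  have hst : 0 < Real.sqrt t := Real.sqrt_pos.mpr ht
  unfold d1
  have h := (((((hasDerivAt_id s).div_const K).log (div_pos hs hK).ne').add_const
    ((r - q + σ ^ 2 / 2) * t)).div_const (σ * Real.sqrt t))
  refine h.congr_deriv ?_
  simp only [id]
  field_simp

lemma differentiableAt_d1_t (σ r q K s t : ℝ) (hσ : 0 < σ) (ht : 0 < t) :
    DifferentiableAt ℝ (fun x => d1 σ r q s K x) t := by
  have hst : 0 < Real.sqrt t := Real.sqrt_pos.mpr ht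
  unfold d1
  refine DifferentiableAt.div (by fun_prop) ?_ (by positivity)
  exact (differentiableAt_id.sqrt ht.ne').const_mul σ

lemma hasDerivAt_call_s (σ r q K s t : ℝ) (hσ : 0 < σ) (hK : 0 < K) (hs : 0 < s) (ht : 0 < t) :
    HasDerivAt (fun x => callPrice σ r q K x t)
      (Real.exp (-q * t) * stdNormalCDF (d1 σ r q s K t)) s := by
  have h1 := hasDerivAt_d1_s σ r q K s t hσ hK hs ht
  have h2 : HasDerivAt (fun x => d2 σ r q x K t) (1 / (s * (σ * Real.sqrt t))) s :=
    h1.sub_const _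
  have hN1 := (hasDerivAt_cdf (d1 σ r q s K t)).comp s h1
  have hN2 := (hasDerivAt_cdf (d2 σ r q s K t)).comp s h2
  have h := (((hasDerivAt_id s).mul_const (Real.exp (-q * t))).mul hN1).sub
    (hN2.const_mul (K * Real.exp (-r * t)))
  refine h.congr_deriv ?_
  have key := key_identity σ r q K s t hσ hK hs ht
  simp only [id, Function.comp]
  linear_combination (-(1 / (s * (σ * Real.sqrt t)))) * key

lemma hasDerivAt_call_t (σ r q K s t : ℝ) (hσ : 0 < σ) (hK : 0 < K) (hs : 0 < s) (ht : 0 < t) :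
    HasDerivAt (fun x => callPrice σ r q K s x)
      (-q * s * Real.exp (-q * t) * stdNormalCDF (d1 σ r q s K t)
        + r * K * Real.exp (-r * t) * stdNormalCDF (d2 σ r q s K t)
        + s * Real.exp (-q * t) * stdPhi (d1 σ r q s K t) * (σ * (1 / (2 * Real.sqrt t)))) t := by
  have h1 := (differentiableAt_d1_t σ r q K s t hσ ht).hasDerivAt
  have h2 : HasDerivAt (fun x => d2 σ r q s K x) _ t :=
    h1.sub ((Real.hasDerivAt_sqrt ht.ne').const_mul σ)
  have hN1 := (hasDerivAt_cdf (d1 σ r q s K t)).comp t h1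
  have hN2 := (hasDerivAt_cdf (d2 σ r q s K t)).comp t h2
  have he (a : ℝ) := ((hasDerivAt_id t).const_mul a).exp
  have h := (((he (-q)).const_mul s).mul hN1).sub (((he (-r)).const_mul K).mul hN2)
  refine h.congr_deriv ?_
  have key := key_identity σ r q K s t hσ hK hs ht
  simp only [id, Function.comp]
  linear_combination (-(deriv (fun x => d1 σ r q s K x) t) + σ * (1 / (2 * Real.sqrt t))) * key



/-- The Black–Scholes call price satisfies the forward Black–Scholes PDE
    ∂u/∂t − (1/2)σ²s² ∂²u/∂s² − (r−q)s ∂u/∂s + r u = 0 for s > 0, 0 < t ≤ T. -/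
theorem blackScholes_call_solves_forward_pde
    (σ r q K T : ℝ) (hσ : 0 < σ) (hK : 0 < K) (hT : 0 < T) :
    ∀ s t : ℝ, 0 < s → 0 < t → t ≤ T →
      deriv (fun τ => callPrice σ r q K s τ) t
        - (1 / 2) * σ ^ 2 * s ^ 2 *
            deriv (fun x => deriv (fun y => callPrice σ r q K y t) x) s
        - (r - q) * s * deriv (fun x => callPrice σ r q K x t) s
        + r * callPrice σ r q K s t = 0 := by
  intro s t hs ht _
  have hst : 0 < Real.sqrt t := Real.sqrt_pos.mpr ht
  have hss : deriv (fun x => deriv (fun y => callPrice σ r q K y t) x) s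
      = Real.exp (-q * t) * (stdPhi (d1 σ r q s K t) * (1 / (s * (σ * Real.sqrt t)))) := by
    have hev : (fun x => deriv (fun y => callPrice σ r q K y t) x) =ᶠ[nhds s]
        fun x => Real.exp (-q * t) * stdNormalCDF (d1 σ r q x K t) := by
      filter_upwards [lt_mem_nhds hs] with x hx
      exact (hasDerivAt_call_s σ r q K x t hσ hK hx ht).deriv
    rw [hev.deriv_eq]
    exact (((hasDerivAt_cdf (d1 σ r q s K t)).comp s
      (hasDerivAt_d1_s σ r q K s t hσ hK hs ht)).const_mul _).deriv
  rw [hss, (hasDerivAt_call_s σ r q K s t hσ hK hs ht).deriv,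
    (hasDerivAt_call_t σ r q K s t hσ hK hs ht).deriv]
  unfold callPrice
  field_simp
  ring
end

section
/- Let σ > 0, r, q ∈ ℝ, K > 0, t > 0. The Delta of the Black–Scholes call, i.e. the partial derivative with respect to s of C(s,t) = s·e^{-q t}·N(d₁(s,K,t)) − K·e^{-r t}·N(d₂(s,K,t)), equals e^{-q t}·N(d₁(s,K,t)) for every s > 0. -/
open Real Set

/-- The Black–Scholes European put price. -/
noncomputable def putPrice (σ r q K s t : ℝ) : ℝ :=
  K * Real.exp (-r * t) * stdNormalCDF (-(d2 σ r q s K t))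
    - s * Real.exp (-q * t) * stdNormalCDF (-(d1 σ r q s K t))

/-- The standard normal probability density function. -/
noncomputable def stdNormalPDF (x : ℝ) : ℝ :=
  (Real.sqrt (2 * Real.pi))⁻¹ * Real.exp (-(x ^ 2) / 2)

theorem stdNormalCDF_hasDerivAt (x : ℝ) : HasDerivAt stdNormalCDF (stdNormalPDF x) x := by
  have hc : Continuous stdNormalPDF := by
    unfold stdNormalPDF
    fun_prop
  have hi : MeasureTheory.Integrable stdNormalPDF := by
    have h := ProbabilityTheory.integrable_gaussianPDFReal 0 1
    have e : ProbabilityTheory.gaussianPDFReal 0 1 = stdNormalPDF := by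
      funext y
      simp [ProbabilityTheory.gaussianPDFReal_def, stdNormalPDF]
    rwa [e] at h
  have e : stdNormalCDF = fun y => (∫ u in (0 : ℝ)..y, stdNormalPDF u) + stdNormalCDF 0 := by
    funext y
    rw [← intervalIntegral.integral_Iic_sub_Iic hi.integrableOn hi.integrableOn]
    simp only [stdNormalCDF, stdNormalPDF]
    ring
  rw [e]
  exact (intervalIntegral.integral_hasDerivAt_right (hc.intervalIntegrable _ _)
    hc.stronglyMeasurable.stronglyMeasurableAtFilter hc.continuousAt).add_const _

theorem pdf_identity (σ r q K t s : ℝ) (hσ : 0 < σ) (hK : 0 < K) (ht : 0 < t) (hs : 0 < s) :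
    K * Real.exp (-r * t) * stdNormalPDF (d2 σ r q s K t)
      = s * Real.exp (-q * t) * stdNormalPDF (d1 σ r q s K t) := by
  have hw : 0 < σ * Real.sqrt t := mul_pos hσ (Real.sqrt_pos.2 ht)
  have h1 : d1 σ r q s K t * (σ * Real.sqrt t)
      = Real.log (s / K) + (r - q + σ ^ 2 / 2) * t := by
    unfold d1
    exact div_mul_cancel₀ _ hw.ne'
  have h2 : (σ * Real.sqrt t) ^ 2 = σ ^ 2 * t := by
    rw [mul_pow, Real.sq_sqrt ht.le]
  rw [Real.log_div hs.ne' hK.ne'] at h1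
  unfold stdNormalPDF d2
  have h3 : Real.exp (Real.log K) * Real.exp (-r * t)
        * Real.exp (-((d1 σ r q s K t - σ * Real.sqrt t) ^ 2) / 2)
      = Real.exp (Real.log s) * Real.exp (-q * t) * Real.exp (-((d1 σ r q s K t) ^ 2) / 2) := by
    rw [← Real.exp_add, ← Real.exp_add, ← Real.exp_add, ← Real.exp_add]
    congr 1
    linear_combination h1 - h2 / 2
  rw [Real.exp_log hs, Real.exp_log hK] at h3
  linear_combination (Real.sqrt (2 * Real.pi))⁻¹ * h3

/-- The Delta of the Black–Scholes call equals e^{-qt}·N(d₁). -/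
theorem blackScholes_call_delta
    (σ r q K t : ℝ) (hσ : 0 < σ) (hK : 0 < K) (ht : 0 < t) :
    ∀ s : ℝ, 0 < s →
      deriv (fun x => callPrice σ r q K x t) s
        = Real.exp (-q * t) * stdNormalCDF (d1 σ r q s K t) := by
  intro s hs
  have hd : ∃ D, HasDerivAt (fun x => d1 σ r q x K t) D s := by
    refine ⟨_, DifferentiableAt.hasDerivAt ?_⟩
    unfold d1
    have : s / K ≠ 0 := (div_pos hs hK).ne'
    fun_prop (disch := assumption)
  obtain ⟨D, hD⟩ := hd
  have hD2 : HasDerivAt (fun x => d2 σ r q x K t) D s := hD.sub_const _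
  have hN1 := (stdNormalCDF_hasDerivAt (d1 σ r q s K t)).comp s hD
  have hN2 := (stdNormalCDF_hasDerivAt (d2 σ r q s K t)).comp s hD2
  have hC : HasDerivAt (fun x => callPrice σ r q K x t) _ s :=
    (((hasDerivAt_id s).mul_const (Real.exp (-q * t))).mul hN1).sub
      (hN2.const_mul (K * Real.exp (-r * t)))
  rw [hC.deriv]
  simp only [Function.comp, id]
  linear_combination (-D) * pdf_identity σ r q K t s hσ hK ht hs
end

section
/- Let σ > 0, r, q ∈ ℝ, s > 0, K > 0, t > 0. The Black–Scholes call price is strictly positive: C(s,t) = s·e^{-q t}·N(d₁(s,K,t)) − K·e^{-r t}·N(d₂(s,K,t)) > 0. -/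
open Real Set

open MeasureTheory in
/-- Integrability of the (unshifted or shifted) normal density. -/
lemma bs_integrable (a : ℝ) : Integrable
    (fun y : ℝ => (Real.sqrt (2 * Real.pi))⁻¹ * Real.exp (-((y - a) ^ 2) / 2)) := by
  have h := ProbabilityTheory.integrable_gaussianPDFReal a 1
  rw [ProbabilityTheory.gaussianPDFReal_def] at h
  simpa using h

open MeasureTheory in
lemma bs_shift (a d : ℝ) : stdNormalCDF (d - a) =
    ∫ y in Set.Iic d, (Real.sqrt (2 * Real.pi))⁻¹ * Real.exp (-((y - a) ^ 2) / 2) := by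
  unfold stdNormalCDF
  have h := (measurePreserving_sub_right (volume : Measure ℝ) a).setIntegral_preimage_emb
    (MeasurableEquiv.subRight a).measurableEmbedding
    (fun y : ℝ => (Real.sqrt (2 * Real.pi))⁻¹ * Real.exp (-(y ^ 2) / 2)) (Set.Iic (d - a))
  rw [← h]
  congr 2
  ext y
  simp

open MeasureTheory in
lemma bs_key (A B a d : ℝ) (hB : 0 < B) (ha : 0 < a)
    (hAB : A = B * Real.exp (a * d - a ^ 2 / 2)) :
    0 < A * stdNormalCDF d - B * stdNormalCDF (d - a) := by
  have hi0 := bs_integrable 0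
  have hia := bs_integrable a
  simp only [sub_zero] at hi0
  rw [bs_shift]
  unfold stdNormalCDF
  rw [← integral_const_mul, ← integral_const_mul,
    ← integral_sub (hi0.integrableOn.const_mul A) (hia.integrableOn.const_mul B)]
  have hc : 0 < (Real.sqrt (2 * Real.pi))⁻¹ := by positivity
  have hf : ∀ y : ℝ, A * ((Real.sqrt (2 * Real.pi))⁻¹ * Real.exp (-(y ^ 2) / 2))
      - B * ((Real.sqrt (2 * Real.pi))⁻¹ * Real.exp (-((y - a) ^ 2) / 2))
      = (B * (Real.sqrt (2 * Real.pi))⁻¹ * Real.exp (-(y ^ 2) / 2)) *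
        (Real.exp (a * d - a ^ 2 / 2) - Real.exp (a * y - a ^ 2 / 2)) := by
    intro y
    have : Real.exp (-((y - a) ^ 2) / 2)
        = Real.exp (-(y ^ 2) / 2) * Real.exp (a * y - a ^ 2 / 2) := by
      rw [← Real.exp_add]; congr 1; ring
    rw [this, hAB]; ring
  have hpos : ∀ y : ℝ, y < d → 0 < A * ((Real.sqrt (2 * Real.pi))⁻¹ * Real.exp (-(y ^ 2) / 2))
      - B * ((Real.sqrt (2 * Real.pi))⁻¹ * Real.exp (-((y - a) ^ 2) / 2)) := by
    intro y hy
    rw [hf]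
    refine mul_pos (by positivity) (sub_pos.2 (Real.exp_lt_exp.2 ?_))
    have := mul_lt_mul_of_pos_left hy ha
    linarith
  rw [integral_Iic_eq_integral_Iio]
  rw [setIntegral_pos_iff_support_of_nonneg_ae]
  · have : Set.Iio d ⊆ Function.support (fun y : ℝ =>
        A * ((Real.sqrt (2 * Real.pi))⁻¹ * Real.exp (-(y ^ 2) / 2))
        - B * ((Real.sqrt (2 * Real.pi))⁻¹ * Real.exp (-((y - a) ^ 2) / 2))) :=
      fun y hy => (hpos y hy).ne'
    rw [Set.inter_eq_right.2 this]
    simp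
  · filter_upwards [ae_restrict_mem measurableSet_Iio] with y hy
    exact (hpos y hy).le
  · exact ((hi0.const_mul A).sub (hia.const_mul B)).integrableOn

/-- The Black–Scholes call price is strictly positive. -/
theorem blackScholes_call_pos
    (σ r q s K t : ℝ) (hσ : 0 < σ) (hs : 0 < s) (hK : 0 < K) (ht : 0 < t) :
    0 < callPrice σ r q K s t := by
  unfold callPrice d2
  have ha : 0 < σ * Real.sqrt t := by positivity
  refine bs_key _ _ _ _ (by positivity) ha ?_
  have h1 : σ * Real.sqrt t * d1 σ r q s K t = Real.log (s / K) + (r - q + σ ^ 2 / 2) * t := by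
    unfold d1
    exact mul_div_cancel₀ _ ha.ne'
  have h2 : (σ * Real.sqrt t) ^ 2 = σ ^ 2 * t := by
    rw [mul_pow, Real.sq_sqrt ht.le]
  rw [h1, h2, mul_assoc, ← Real.exp_add]
  have h3 : -r * t + (Real.log (s / K) + (r - q + σ ^ 2 / 2) * t - σ ^ 2 * t / 2)
      = Real.log (s / K) + -q * t := by ring
  rw [h3, Real.exp_add, Real.exp_log (by positivity)]
  field_simp
end

section
/- Let σ > 0, r, q ∈ ℝ, K > 0 and t > 0 be fixed. The Black–Scholes call price satisfies the far-field boundary behavior lim_{s→∞} [C(s,t) − (s·e^{-q t} − K·e^{-r t})] = 0, where C(s,t) = s·e^{-q t}·N(d₁(s,K,t)) − K·e^{-r t}·N(d₂(s,K,t)). -/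
open Real Set

open MeasureTheory ProbabilityTheory Filter in
lemma stdNormalCDF_eq (x : ℝ) : stdNormalCDF x = (gaussianReal 0 1).real (Set.Iic x) := by
  rw [measureReal_def, gaussianReal_apply_eq_integral 0 one_ne_zero, ENNReal.toReal_ofReal]
  · simp [stdNormalCDF, gaussianPDFReal]
  · exact integral_nonneg fun y => gaussianPDFReal_nonneg _ _ _

open MeasureTheory ProbabilityTheory Filter in
lemma stdNormalCDF_tail (x a : ℝ) (ha : 0 ≤ a) :
    1 - stdNormalCDF x ≤ Real.exp (-a * x) * Real.exp (a ^ 2 / 2) := by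
  have h1 : 1 - stdNormalCDF x = (gaussianReal 0 1).real (Set.Iic x)ᶜ := by
    rw [stdNormalCDF_eq, probReal_compl_eq_one_sub measurableSet_Iic]
  have h2 := measure_ge_le_exp_mul_mgf (μ := gaussianReal 0 1) (X := id) (t := a) x ha
    (by simpa using integrable_exp_mul_gaussianReal (μ := 0) (v := 1) a)
  rw [mgf_id_gaussianReal] at h2
  rw [h1]
  refine (measureReal_mono ?_).trans (h2.trans (le_of_eq ?_))
  · intro y hy
    simp only [Set.mem_compl_iff, Set.mem_Iic, not_le] at hy
    exact hy.le
  · simp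

open MeasureTheory ProbabilityTheory Filter in
lemma stdNormalCDF_tendsto : Tendsto stdNormalCDF atTop (nhds 1) := by
  have : stdNormalCDF = cdf (gaussianReal 0 1) := by
    funext x
    rw [stdNormalCDF_eq, cdf_eq_real]
  rw [this]
  exact tendsto_cdf_atTop _

lemma stdNormalCDF_le_one (x : ℝ) : stdNormalCDF x ≤ 1 := by
  rw [stdNormalCDF_eq]
  exact MeasureTheory.measureReal_le_one

/-- Far-field behavior: C(s,t) − (s·e^{-qt} − K·e^{-rt}) → 0 as s → ∞. -/
theorem blackScholes_call_far_field
    (σ r q K t : ℝ) (hσ : 0 < σ) (hK : 0 < K) (ht : 0 < t) :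
    Filter.Tendsto
      (fun s => callPrice σ r q K s t - (s * Real.exp (-q * t) - K * Real.exp (-r * t)))
      Filter.atTop (nhds 0) := by
  have hb : 0 < σ * Real.sqrt t := mul_pos hσ (Real.sqrt_pos.2 ht)
  have hd1 : Filter.Tendsto (fun s => d1 σ r q s K t) Filter.atTop Filter.atTop := by
    unfold d1
    refine Filter.Tendsto.atTop_div_const hb (Filter.tendsto_atTop_add_const_right _ _ ?_)
    exact Real.tendsto_log_atTop.comp (Filter.tendsto_id.atTop_div_const hK)
  have hd2 : Filter.Tendsto (fun s => d2 σ r q s K t) Filter.atTop Filter.atTop := by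
    unfold d2
    simpa only [sub_eq_add_neg] using
      Filter.tendsto_atTop_add_const_right _ (-(σ * Real.sqrt t)) hd1
  have hN2 := stdNormalCDF_tendsto.comp hd2
  set c := (r - q + σ ^ 2 / 2) * t with hc
  set b := σ * Real.sqrt t with hbdef
  have hlim : Filter.Tendsto (fun s => s * (1 - stdNormalCDF (d1 σ r q s K t)))
      Filter.atTop (nhds 0) := by
    have hup : Filter.Tendsto
        (fun s : ℝ => (K ^ 2 * Real.exp (-2 * c) * Real.exp ((2 * b) ^ 2 / 2)) / s)
        Filter.atTop (nhds 0) := Filter.tendsto_id.const_div_atTop _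
    refine tendsto_of_tendsto_of_tendsto_of_le_of_le' tendsto_const_nhds hup ?_ ?_
    · filter_upwards [Filter.eventually_gt_atTop 0] with s hs
      exact mul_nonneg hs.le (sub_nonneg.2 (stdNormalCDF_le_one _))
    · filter_upwards [Filter.eventually_gt_atTop 0] with s hs
      have h := stdNormalCDF_tail (d1 σ r q s K t) (2 * b) (by positivity)
      have he : Real.exp (-(2 * b) * d1 σ r q s K t) = K ^ 2 / s ^ 2 * Real.exp (-2 * c) := by
        have h1 : -(2 * b) * d1 σ r q s K t
            = Real.log (K / s) + Real.log (K / s) + -2 * c := by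
          have h2 : Real.log (K / s) = - Real.log (s / K) := by
            rw [← Real.log_inv, inv_div]
          rw [h2]
          unfold d1
          rw [← hc, ← hbdef]
          field_simp
          ring
        rw [h1, Real.exp_add, Real.exp_add, Real.exp_log (by positivity)]
        ring
      rw [he] at h
      calc _ ≤ s * (K ^ 2 / s ^ 2 * Real.exp (-2 * c) * Real.exp ((2 * b) ^ 2 / 2)) :=
            mul_le_mul_of_nonneg_left h hs.le
        _ = _ := by field_simp
  have h := (hlim.const_mul (-Real.exp (-q * t))).add
    ((hN2.const_sub 1).const_mul (K * Real.exp (-r * t)))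
  simp only [mul_zero, sub_self, add_zero] at h
  refine h.congr fun s => ?_
  simp only [callPrice, Function.comp]
  ring
end

section
/- Let σ > 0, r, q ∈ ℝ, B > 0, T > 0 and set λ = (2/σ²)(r − q − σ²/2). If v : (0,∞) × (0,T] → ℝ is twice continuously differentiable in s and continuously differentiable in t and satisfies the forward Black–Scholes PDE ∂v/∂t − (1/2)σ²s² ∂²v/∂s² − (r−q)s ∂v/∂s + r v = 0 on (0,∞) × (0,T], then the reflected function w(s,t) = (B/s)^λ · v(B²/s, t) also satisfies the forward Black–Scholes PDE on (0,∞) × (0,T]. -/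
open Real Set

/-- The reflection exponent λ = (2/σ²)(r − q − σ²/2) for a barrier. -/
noncomputable def reflectionExponent (σ r q : ℝ) : ℝ :=
  (2 / σ ^ 2) * (r - q - σ ^ 2 / 2)

/-- If v solves the forward Black–Scholes PDE on (0,∞)×(0,T], then so does the
    reflected function w(s,t) = (B/s)^λ · v(B²/s, t), with λ = (2/σ²)(r−q−σ²/2). -/
theorem blackScholes_reflection_invariance
    (σ r q B T : ℝ) (hσ : 0 < σ) (hB : 0 < B) (hT : 0 < T)
    (v : ℝ → ℝ → ℝ)
    (hv_s : ∀ t ∈ Set.Ioc (0 : ℝ) T, ContDiffOn ℝ 2 (fun s => v s t) (Set.Ioi 0))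
    (hv_t : ∀ s ∈ Set.Ioi (0 : ℝ), ContDiffOn ℝ 1 (fun t => v s t) (Set.Ioc 0 T))
    (hpde : ∀ s ∈ Set.Ioi (0 : ℝ), ∀ t ∈ Set.Ioc (0 : ℝ) T,
      deriv (fun τ => v s τ) t
        - (1 / 2) * σ ^ 2 * s ^ 2 * deriv (fun x => deriv (fun y => v y t) x) s
        - (r - q) * s * deriv (fun x => v x t) s
        + r * v s t = 0) :
    ∀ s ∈ Set.Ioi (0 : ℝ), ∀ t ∈ Set.Ioc (0 : ℝ) T,
      deriv (fun τ => (B / s) ^ reflectionExponent σ r q * v (B ^ 2 / s) τ) t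
        - (1 / 2) * σ ^ 2 * s ^ 2 *
            deriv (fun x =>
              deriv (fun y => (B / y) ^ reflectionExponent σ r q * v (B ^ 2 / y) t) x) s
        - (r - q) * s *
            deriv (fun x => (B / x) ^ reflectionExponent σ r q * v (B ^ 2 / x) t) s
        + r * ((B / s) ^ reflectionExponent σ r q * v (B ^ 2 / s) t) = 0 := by
  intro s hs t ht
  have hs0 : (0 : ℝ) < s := hs
  set l := reflectionExponent σ r q with hl
  have hlσ : σ ^ 2 * l = 2 * (r - q) - σ ^ 2 := by
    rw [hl, reflectionExponent]
    field_simp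
  set f : ℝ → ℝ := fun y => v y t with hf
  have hC : ContDiffOn ℝ 2 f (Set.Ioi 0) := hv_s t ht
  have hf1 : ∀ x : ℝ, 0 < x → HasDerivAt f (deriv f x) x := fun x hx =>
    ((hC.differentiableOn (by norm_num)).differentiableAt (Ioi_mem_nhds hx)).hasDerivAt
  have hC1 : ContDiffOn ℝ 1 (deriv f) (Set.Ioi 0) :=
    hC.deriv_of_isOpen isOpen_Ioi (by norm_num)
  have hf2 : ∀ x : ℝ, 0 < x → HasDerivAt (deriv f) (deriv (deriv f) x) x := fun x hx =>
    ((hC1.differentiableOn (by norm_num)).differentiableAt (Ioi_mem_nhds hx)).hasDerivAt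
  have hg : ∀ (c x : ℝ), 0 < x → HasDerivAt (fun y => c / y) (-c / x ^ 2) x := by
    intro c x hx
    have h := (hasDerivAt_const x c).div (hasDerivAt_id x) hx.ne'
    refine h.congr_deriv ?_
    simp
  have hp : ∀ x : ℝ, 0 < x →
      HasDerivAt (fun y => (B / y) ^ l) (-l / x * (B / x) ^ l) x := by
    intro x hx
    have hBx : 0 < B / x := div_pos hB hx
    have h := (hg B x hx).rpow_const (p := l) (Or.inl hBx.ne')
    refine h.congr_deriv ?_
    rw [Real.rpow_sub_one hBx.ne']
    field_simp
  have hz : ∀ x : ℝ, 0 < x → 0 < B ^ 2 / x := fun x hx => by positivity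
  have hw1 : ∀ x : ℝ, 0 < x → HasDerivAt (fun y => (B / y) ^ l * f (B ^ 2 / y))
      ((B / x) ^ l * (-l / x * f (B ^ 2 / x) + (-B ^ 2 / x ^ 2) * deriv f (B ^ 2 / x))) x := by
    intro x hx
    have h := (hp x hx).mul ((hf1 _ (hz x hx)).comp x (hg (B ^ 2) x hx))
    refine h.congr_deriv ?_
    simp only [Function.comp]
    ring
  have hsq : HasDerivAt (fun y : ℝ => -B ^ 2 / y ^ 2) (2 * B ^ 2 / s ^ 3) s := by
    have h := (hasDerivAt_const s (-B ^ 2)).div (hasDerivAt_pow 2 s) (pow_ne_zero 2 hs0.ne')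
    refine h.congr_deriv ?_
    field_simp
    simp
    ring
  have hw2 := (hp s hs0).mul
    (((hg (-l) s hs0).mul ((hf1 _ (hz s hs0)).comp s (hg (B ^ 2) s hs0))).add
      (hsq.mul ((hf2 _ (hz s hs0)).comp s (hg (B ^ 2) s hs0))))
  have hev : (fun x => deriv (fun y => (B / y) ^ l * f (B ^ 2 / y)) x) =ᶠ[nhds s]
      (fun x => (B / x) ^ l *
        (-l / x * f (B ^ 2 / x) + (-B ^ 2 / x ^ 2) * deriv f (B ^ 2 / x))) := by
    filter_upwards [Ioi_mem_nhds hs0] with x hx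
    exact (hw1 x hx).deriv
  have e2 := hev.deriv_eq.trans hw2.deriv
  have e1 := (hw1 s hs0).deriv
  have P := hpde (B ^ 2 / s) (hz s hs0) t ht
  change _ - (1 / 2) * σ ^ 2 * s ^ 2 *
    deriv (fun x => deriv (fun y => (B / y) ^ l * f (B ^ 2 / y)) x) s
    - (r - q) * s * deriv (fun y => (B / y) ^ l * f (B ^ 2 / y)) s
    + r * ((B / s) ^ l * f (B ^ 2 / s)) = 0
  change _ - (1 / 2) * σ ^ 2 * (B ^ 2 / s) ^ 2 * deriv (deriv f) (B ^ 2 / s)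
    - (r - q) * (B ^ 2 / s) * deriv f (B ^ 2 / s) + r * f (B ^ 2 / s) = 0 at P
  rw [e2, e1, deriv_const_mul_field]
  simp only [Function.comp, Pi.mul_apply, Pi.add_apply]
  generalize deriv (fun τ => v (B ^ 2 / s) τ) t = D at *
  generalize deriv (deriv f) (B ^ 2 / s) = F2 at *
  generalize deriv f (B ^ 2 / s) = F1 at *
  generalize f (B ^ 2 / s) = F0 at *
  generalize (B / s) ^ l = p at *
  have hrq : r - q = (σ ^ 2 * l + σ ^ 2) / 2 := by linarith
  rw [hrq] at P ⊢
  have hD : D = (1 / 2) * σ ^ 2 * (B ^ 2 / s) ^ 2 * F2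
    + (σ ^ 2 * l + σ ^ 2) / 2 * (B ^ 2 / s) * F1 - r * F0 := by linarith
  rw [hD]
  field_simp
  ring
end
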